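/- arXiv:2301.13440 — 2 statements merged into one kernel-verified Lean document; each statement's English description precedes it below -/
import Mathlib

section
/- Let G be a finite group with a normal subgroup N, let θ ∈ Irr(N) with θ̄ ≠ θ, and let T := {g ∈ G : θ^g = θ} be the inertia group of θ in G. Suppose |G : T| = 2 and θ^s = θ̄ for some s ∈ G ∖ T. Then ∑_{g ∈ T} θ^G(g²) = 0; equivalently, ε(θ^G) = (1/|G|) ∑_{g ∈ G∖T} θ^G(g²). -/
open scoped BigOperators
attribute [local instance] Classical.propDecidable

noncomputable section

/-- `χ` is an irreducible complex character of the group `G`. -/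
def IsIrrChar (G : Type) [Group G] (χ : G → ℂ) : Prop :=
  ∃ V : FDRep ℂ G, CategoryTheory.Simple V ∧ χ = V.character

/-- Frobenius–Schur indicator of a class function. -/
def FS (G : Type) [Group G] [Fintype G] (χ : G → ℂ) : ℂ :=
  (∑ g : G, χ (g ^ 2)) / (Fintype.card G : ℂ)

/-- The character of `G` induced from a character of the subgroup `H`. -/
def indChar {G : Type} [Group G] [Fintype G] (H : Subgroup G) (θ : ↥H → ℂ) : G → ℂ :=
  fun g => (∑ s : G, if h : s * g * s⁻¹ ∈ H then θ ⟨s * g * s⁻¹, h⟩ else 0) / (Nat.card H : ℂ)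

/-- The conjugate character `θ^g : n ↦ θ (g n g⁻¹)` of a character of a subgroup `H`. -/
def conjChar {G : Type} [Group G] (H : Subgroup G) (θ : ↥H → ℂ) (g : G) : ↥H → ℂ :=
  fun n => if h : g * (n : G) * g⁻¹ ∈ H then θ ⟨g * (n : G) * g⁻¹, h⟩ else 0

/-- The complex conjugate character. -/
def starChar {α : Type} (θ : α → ℂ) : α → ℂ := fun a => (starRingEnd ℂ) (θ a)

/- For `t` in `G` with `t² ∈ N`, write `(tn)² = tnt⁻¹ · t² · n`. The sum of `θ((tn)²)` over `n ∈ N`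
is then the trace of `∑ n, σ(n) C ρ(n)`, where `ρ` affords `θ`, `σ(n) = ρ(tnt⁻¹)` affords `θ^t` and
`C = ρ(t²)`. This operator depends linearly on `∑ n, σ(n) ⊗ ρ(n)`, a multiple of the projection onto
the invariants of `σ ⊗ ρ`, which vanish unless `θ^t = θ̄`. Hence the squares of the elements of a
coset `tN` contribute to the sum of `θ^G` only if some conjugate of `t` carries `θ` to `θ̄`. No
element of a normal inertia group does, because `θ̄ ≠ θ`. -/

section UnitaryTrick

open scoped ComplexOrder Matrix

variable {G n 𝕜 : Type*} [Group G] [Finite G] [Fintype n] [DecidableEq n] [RCLike 𝕜]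

theorem exists_posDef_conjTranspose_mul_mul_eq (R : G →* Matrix n n 𝕜) :
    ∃ M : Matrix n n 𝕜, M.PosDef ∧ ∀ g, (R g)ᴴ * M * R g = M := by
  have := Fintype.ofFinite G
  refine ⟨∑ g, (R g)ᴴ * R g, ?_, fun h => ?_⟩
  · refine Matrix.posDef_sum ⟨1, Finset.mem_univ _⟩ fun g _ => ?_
    have hunit : IsUnit (R g) := (Group.isUnit g).map R
    exact Matrix.PosDef.conjTranspose_mul_self _ (Matrix.mulVec_injective_of_isUnit hunit)
  · simp only [Finset.mul_sum, Finset.sum_mul]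
    refine Fintype.sum_equiv (Equiv.mulRight h) _ _ fun g => ?_
    simp only [Equiv.coe_mulRight, map_mul, Matrix.conjTranspose_mul, Matrix.mul_assoc]

theorem trace_map_inv_eq_star (R : G →* Matrix n n 𝕜) (g : G) :
    (R g⁻¹).trace = star (R g).trace := by
  obtain ⟨M, hM, hR⟩ := exists_posDef_conjTranspose_mul_mul_eq R
  have hdet : IsUnit M.det := (Matrix.isUnit_iff_isUnit_det M).1 hM.isUnit
  have hcomm : M * R g⁻¹ = (R g)ᴴ * M := by
    rw [← congrArg (· * R g⁻¹) (hR g), Matrix.mul_assoc, ← map_mul, mul_inv_cancel, map_one,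
      Matrix.mul_one]
  calc (R g⁻¹).trace = (M⁻¹ * (M * R g⁻¹)).trace := by
        rw [Matrix.nonsing_inv_mul_cancel_left _ _ hdet]
    _ = (R g)ᴴ.trace := by
        rw [hcomm, Matrix.trace_mul_comm, Matrix.mul_nonsing_inv_cancel_right _ _ hdet]
    _ = star (R g).trace := Matrix.trace_conjTranspose _

theorem character_inv_eq_star {V : Type*} [AddCommGroup V] [Module 𝕜 V] [FiniteDimensional 𝕜 V]
    (ρ : Representation 𝕜 G V) (g : G) : ρ.character g⁻¹ = star (ρ.character g) := by
  let b := Module.finBasis 𝕜 V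
  have htrace (h : G) : ρ.character h = (LinearMap.toMatrixAlgEquiv b (ρ h)).trace :=
    LinearMap.trace_eq_matrix_trace 𝕜 b (ρ h)
  rw [htrace, htrace]
  exact trace_map_inv_eq_star ((LinearMap.toMatrixAlgEquiv b).toMulEquiv.toMonoidHom.comp ρ) g

end UnitaryTrick

section SumOfOperators

open scoped TensorProduct

variable {k G V W : Type*} [Field k] [CharZero k] [Group G] [Fintype G]
  [AddCommGroup V] [Module k V] [FiniteDimensional k V]
  [AddCommGroup W] [Module k W] [FiniteDimensional k W]

theorem sum_representation_eq_zero_of_sum_character (τ : Representation k G V)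
    (hτ : ∑ g, τ.character g = 0) : ∑ g, τ g = 0 := by
  let _ : Invertible (Nat.card G : k) := invertibleOfNonzero (by simp)
  have hbot : τ.invariants = ⊥ := by
    rw [← Submodule.finrank_eq_zero (R := k), ← Nat.cast_eq_zero (R := k),
      ← τ.card_inv_mul_sum_char_eq_finrank, hτ, mul_zero]
  ext v
  rw [LinearMap.zero_apply, ← Submodule.mem_bot k, ← hbot]
  intro h
  simp only [LinearMap.sum_apply, map_sum]
  exact Fintype.sum_equiv (Equiv.mulLeft h) _ _ fun g => by simp

theorem sum_tmul_eq_zero_of_sum_character_mul (σ : Representation k G W) (ρ : Representation k G V)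
    (h : ∑ g, σ.character g * ρ.character g = 0) : ∑ g, σ g ⊗ₜ[k] ρ g = 0 := by
  have htprod : ∑ g, σ.tprod ρ g = 0 :=
    sum_representation_eq_zero_of_sum_character _ (by simpa using h)
  apply (homTensorHomEquiv k W V W V).injective
  simpa [homTensorHomEquiv_apply] using htprod

theorem sum_comp_comp_eq_zero_of_sum_character_mul (σ : Representation k G W)
    (ρ : Representation k G V) (h : ∑ g, σ.character g * ρ.character g = 0) (C : V →ₗ[k] W) :
    ∑ g, σ g ∘ₗ C ∘ₗ ρ g = 0 := by
  let sandwich : Module.End k W →ₗ[k] Module.End k V →ₗ[k] V →ₗ[k] W :=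
    LinearMap.mk₂ k (fun f f' => f ∘ₗ C ∘ₗ f') (by simp [LinearMap.add_comp])
      (by simp [LinearMap.smul_comp]) (by simp [LinearMap.comp_add])
      (by simp [LinearMap.comp_smul])
  simpa [sandwich] using
    congrArg (TensorProduct.lift sandwich) (sum_tmul_eq_zero_of_sum_character_mul σ ρ h)

end SumOfOperators

namespace IsIrrChar

open CategoryTheory

variable {H K : Type} [Group H] [Group K] {χ ψ : H → ℂ}

theorem apply_inv [Finite H] (hχ : IsIrrChar H χ) (h : H) : χ h⁻¹ = star (χ h) := by
  obtain ⟨V, -, rfl⟩ := hχ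
  exact character_inv_eq_star V.ρ h

theorem comp_mulEquiv [Finite H] {χ : K → ℂ} (hχ : IsIrrChar K χ) (e : H ≃* K) :
    IsIrrChar H (χ ∘ e) := by
  obtain ⟨V, hV, rfl⟩ := hχ
  have := Fintype.ofFinite H
  have := Fintype.ofEquiv H e.toEquiv
  refine ⟨FDRep.of (V.ρ.comp e), ?_, rfl⟩
  rw [FDRep.simple_iff_char_is_norm_one] at hV ⊢
  rw [Nat.card_congr e.toEquiv, ← hV]
  exact Fintype.sum_equiv e.toEquiv _ _ fun h => by simp [FDRep.character]

protected theorem starChar [Finite H] (hχ : IsIrrChar H χ) : IsIrrChar H (starChar χ) := by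
  have hinv := hχ.apply_inv
  obtain ⟨V, hV, rfl⟩ := hχ
  have := Fintype.ofFinite H
  let W : FDRep ℂ H := FDRep.of (Representation.dual V.ρ)
  have hW (h : H) : W.character h = V.character h⁻¹ := V.char_dual h
  refine ⟨W, ?_, funext fun h => (hinv h).symm.trans (hW h).symm⟩
  rw [FDRep.simple_iff_char_is_norm_one] at hV ⊢
  simp only [hW, ← hV, inv_inv, mul_comm]

theorem sum_mul_eq_zero [Fintype H] (hχ : IsIrrChar H χ) (hψ : IsIrrChar H ψ)
    (hne : χ ≠ starChar ψ) : ∑ h, χ h * ψ h = 0 := by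
  obtain ⟨W, hW, hψW⟩ := hψ.starChar
  obtain ⟨V, hV, rfl⟩ := hχ
  let _ : Invertible (Nat.card H : ℂ) := invertibleOfNonzero (by simp)
  have hVW : ¬ Nonempty (V ≅ W) := fun ⟨i⟩ => hne ((FDRep.char_iso i).trans hψW.symm)
  have hW_inv (h : H) : W.character h⁻¹ = ψ h := by
    rw [← hψW, starChar, hψ.apply_inv, starRingEnd_apply, star_star]
  have horth := FDRep.char_orthonormal V W
  rw [if_neg hVW] at horth
  simpa [hW_inv] using horth

theorem sum_apply_mul_mul_eq_zero [Fintype H] (hχ : IsIrrChar H χ) (φ : MulAut H)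
    (hφ : χ ∘ φ ≠ starChar χ) (c : H) : ∑ h, χ (φ h * c * h) = 0 := by
  have hsum : ∑ h, χ (φ h) * χ h = 0 := (hχ.comp_mulEquiv φ).sum_mul_eq_zero hχ hφ
  obtain ⟨V, -, rfl⟩ := hχ
  have hop := sum_comp_comp_eq_zero_of_sum_character_mul (V.ρ.comp (φ : H →* H)) V.ρ hsum (V.ρ c)
  simpa [FDRep.character, Module.End.mul_eq_comp, LinearMap.comp_assoc] using
    congrArg (LinearMap.trace ℂ V) hop

end IsIrrChar

section InducedCharacter

variable {G : Type} [Group G]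

/-- The extension by zero `θ°` of a function `θ` on a subgroup to the whole group, in terms of
which `θ^G` and `θ^g` are defined. -/
def zeroExtend (H : Subgroup G) (θ : H → ℂ) (g : G) : ℂ :=
  if h : g ∈ H then θ ⟨g, h⟩ else 0

variable {N : Subgroup G} [N.Normal] {θ : N → ℂ}

theorem conjChar_eq_comp_conjNormal (θ : N → ℂ) (t : G) :
    conjChar N θ t = θ ∘ MulAut.conjNormal t :=
  funext fun n => dif_pos (‹N.Normal›.conj_mem n n.2 t)

theorem IsIrrChar.conjChar_of_mem (hθ : IsIrrChar N θ) {m : G} (hm : m ∈ N) :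
    conjChar N θ m = θ := by
  obtain ⟨V, -, rfl⟩ := hθ
  rw [conjChar_eq_comp_conjNormal]
  exact funext fun n => V.char_conj n ⟨m, hm⟩

theorem mul_sq_mem_iff_sq_mem (t : G) (n : N) : (t * n) ^ 2 ∈ N ↔ t ^ 2 ∈ N := by
  simp only [← QuotientGroup.eq_one_iff, QuotientGroup.mk_pow, QuotientGroup.mk_mul_of_mem _ n.2]

variable [Fintype G]

theorem sum_zeroExtend_coset_sq_eq_zero (hθ : IsIrrChar N θ) {t : G}
    (ht : conjChar N θ t ≠ starChar θ) : ∑ n : N, zeroExtend N θ ((t * n) ^ 2) = 0 := by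
  by_cases hsq : t ^ 2 ∈ N
  · rw [conjChar_eq_comp_conjNormal] at ht
    rw [← hθ.sum_apply_mul_mul_eq_zero _ ht ⟨t ^ 2, hsq⟩]
    refine Finset.sum_congr rfl fun n _ => ?_
    rw [zeroExtend, dif_pos ((mul_sq_mem_iff_sq_mem t n).2 hsq)]
    congr 1
    ext
    simp [pow_two, mul_assoc]
  · exact Finset.sum_eq_zero fun n _ => dif_neg ((mul_sq_mem_iff_sq_mem t n).not.2 hsq)

theorem sum_indChar_coset_sq_eq_zero (hθ : IsIrrChar N θ) {t : G}
    (ht : ∀ x, conjChar N θ (x * t * x⁻¹) ≠ starChar θ) :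
    ∑ n : N, indChar N θ ((t * n) ^ 2) = 0 := by
  have hx (x : G) : ∑ n : N, zeroExtend N θ (x * (t * n) ^ 2 * x⁻¹) = 0 := by
    rw [← sum_zeroExtend_coset_sq_eq_zero hθ (ht x)]
    refine Fintype.sum_equiv (MulAut.conjNormal x).toEquiv _ _ fun n => ?_
    rw [← conj_pow]
    simp [mul_assoc]
  change ∑ n : N, (∑ x, zeroExtend N θ (x * (t * n) ^ 2 * x⁻¹)) / (Nat.card N : ℂ) = 0
  rw [← Finset.sum_div, Finset.sum_comm, Finset.sum_eq_zero fun x _ => hx x, zero_div]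

end InducedCharacter

theorem sum_subgroup_eq_zero_of_sum_coset_eq_zero {G M : Type*} [Group G] [Fintype G]
    [AddCommMonoid M] [IsAddTorsionFree M] {N T : Subgroup G} (hNT : N ≤ T) {f : G → M}
    (hf : ∀ t ∈ T, ∑ n : N, f (t * n) = 0) : ∑ g with g ∈ T, f g = 0 := by
  have hshift (n : N) : ∑ g with g ∈ T, f (g * n) = ∑ g with g ∈ T, f g :=
    Finset.sum_equiv (Equiv.mulRight (n : G))
      (fun g => by simp [T.mul_mem_cancel_right (hNT n.2)]) fun _ _ => rfl
  have hcard : Fintype.card N • ∑ g with g ∈ T, f g = 0 :=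
    calc Fintype.card N • ∑ g with g ∈ T, f g = ∑ n : N, ∑ g with g ∈ T, f (g * n) := by
          simp [hshift]
      _ = ∑ g with g ∈ T, ∑ n : N, f (g * n) := Finset.sum_comm
      _ = 0 := Finset.sum_eq_zero fun g hg => hf g (Finset.mem_filter.1 hg).2
  simpa using hcard

theorem stmt9_general {G : Type} [Group G] [Fintype G] (N : Subgroup G) [N.Normal]
    (θ : ↥N → ℂ) (hθ : IsIrrChar ↥N θ) (hnr : starChar θ ≠ θ)
    (T : Subgroup G) [T.Normal] (hT : ∀ g : G, g ∈ T ↔ conjChar N θ g = θ) :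
    (∑ g ∈ Finset.univ.filter (fun g : G => g ∈ T), indChar N θ (g ^ 2)) = 0 ∧
    FS G (indChar N θ) =
      (∑ g ∈ Finset.univ.filter (fun g : G => g ∉ T), indChar N θ (g ^ 2)) /
        (Fintype.card G : ℂ) := by
  have hNT : N ≤ T := fun m hm => (hT m).2 (hθ.conjChar_of_mem hm)
  have hconj (t : G) (ht : t ∈ T) (x : G) : conjChar N θ (x * t * x⁻¹) ≠ starChar θ := by
    rw [(hT _).1 (‹T.Normal›.conj_mem t ht x)]
    exact hnr.symm
  have hsum : ∑ g with g ∈ T, indChar N θ (g ^ 2) = 0 :=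
    sum_subgroup_eq_zero_of_sum_coset_eq_zero hNT fun t ht =>
      sum_indChar_coset_sq_eq_zero hθ (hconj t ht)
  refine ⟨hsum, ?_⟩
  rw [FS, ← Finset.sum_filter_add_sum_filter_not Finset.univ (· ∈ T), hsum, zero_add]

/-- Let `N ⊴ G`, `θ ∈ Irr(N)` with `θ̄ ≠ θ`, and let `T` be the inertia group
of `θ` in `G`. If `|G : T| = 2` and `θ^s = θ̄` for some `s ∈ G ∖ T`, then
`∑_{g ∈ T} θ^G(g²) = 0`; equivalently, `ε(θ^G) = (1/|G|) ∑_{g ∈ G∖T} θ^G(g²)`. -/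
theorem stmt9 {G : Type} [Group G] [Fintype G] (N : Subgroup G) [N.Normal]
    (θ : ↥N → ℂ) (hθ : IsIrrChar ↥N θ) (hnr : starChar θ ≠ θ)
    (T : Subgroup G) (hT : ∀ g : G, g ∈ T ↔ conjChar N θ g = θ) (hidx : T.index = 2)
    (s : G) (hs : s ∉ T) (hconj : conjChar N θ s = starChar θ) :
    (∑ g ∈ Finset.univ.filter (fun g : G => g ∈ T), indChar N θ (g ^ 2)) = 0 ∧
    FS G (indChar N θ) =
      (∑ g ∈ Finset.univ.filter (fun g : G => g ∉ T), indChar N θ (g ^ 2)) /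
        (Fintype.card G : ℂ) := by
  have := Subgroup.normal_of_index_eq_two hidx
  exact stmt9_general N θ hθ hnr T hT
end
end

section
/- Let E be a finite 2-group, D ≤ E a subgroup of index 2, Q a cyclic group of order 3, and G = Q ⋊ E the semidirect product in which D acts trivially on Q and every element of E∖D acts on Q by inversion. Fix a nontrivial irreducible character θ of Q, and for λ ∈ Irr(D) let χ_λ := (θ × λ)^G be the character of G induced from the irreducible character θ × λ of the subgroup Q × D. Then for every λ ∈ Irr(D), the Frobenius–Schur indicator of χ_λ is given by the Gow indicator of λ: ε(χ_λ) = (1/|D|) ∑_{e ∈ E∖D} λ(e²). -/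
/-!
If `H` has index two in `G`, all squares of `G` lie in `H`, so splitting `∑ g, χ (g ^ 2)` over the
two cosets of `H` gives `ε(χ^G) = ε(χ) + Gow(χ)`, where `Gow` is the Gow indicator.
Apply this to `Q × D ≤ Q ⋊ E` and `χ = θ × λ`. On the subgroup, `ε(θ × λ) = ε(θ) ε(λ)`; off it,
`(q, e) ^ 2 = (q q⁻¹, e ^ 2) = (1, e ^ 2)`, so that `Gow(θ × λ) = θ(1) Gow(λ)`.
Since `Q` admits inversion as an automorphism it is abelian, hence `θ` is a linear character and
`θ(1) = 1`; if `θ` is not real, then `θ ^ 2 ≠ 1` and `ε(θ) = 0`. In odd order every nontrivial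
linear character is nonreal.
-/

open scoped BigOperators
attribute [local instance] Classical.propDecidable

noncomputable section

instance semidirectProductFintype {N G : Type} [Group N] [Group G] [Fintype N] [Fintype G]
    (φ : G →* MulAut N) : Fintype (N ⋊[φ] G) :=
  Fintype.ofEquiv (N × G)
    { toFun := fun p => ⟨p.1, p.2⟩
      invFun := fun x => (x.left, x.right)
      left_inv := fun _ => rfl
      right_inv := fun _ => rfl }

section InducedCharacter

variable {G : Type} [Group G] [Fintype G]

lemma FS_indChar (H : Subgroup G) (χ : H → ℂ) :
    FS G (indChar H χ) =
      (∑ g : G, if h : g ^ 2 ∈ H then χ ⟨g ^ 2, h⟩ else 0) / (Nat.card H : ℂ) := by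
  have hG : (Fintype.card G : ℂ) ≠ 0 := Nat.cast_ne_zero.2 Fintype.card_ne_zero
  let F : G → ℂ := fun g => if h : g ∈ H then χ ⟨g, h⟩ else 0
  have sum_conj (s : G) : ∑ g, F (s * g ^ 2 * s⁻¹) = ∑ g, F (g ^ 2) := by
    rw [← (MulAut.conj s).toEquiv.sum_comp fun g => F (g ^ 2)]
    simp
  calc FS G (indChar H χ)
      = (∑ g, (∑ s, F (s * g ^ 2 * s⁻¹)) / (Nat.card H : ℂ)) / (Fintype.card G : ℂ) := rfl
    _ = (Fintype.card G * ∑ g, F (g ^ 2)) / (Nat.card H : ℂ) / (Fintype.card G : ℂ) := by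
        rw [← Finset.sum_div, Finset.sum_comm]
        simp only [sum_conj, Finset.sum_const, Finset.card_univ, nsmul_eq_mul]
    _ = (∑ g, F (g ^ 2)) / (Nat.card H : ℂ) := by field_simp

/-- The Gow indicator with respect to `G` of a function `χ` on a subgroup `H` of index two. The
index is a hypothesis because it is what makes `χ (g ^ 2)` meaningful for `g ∉ H`. -/
def gowIndicator (H : Subgroup G) (hH : H.index = 2) (χ : H → ℂ) : ℂ :=
  (∑ g ∈ Finset.univ.filter (fun g : G => g ∉ H),
    χ ⟨g ^ 2, Subgroup.sq_mem_of_index_two hH g⟩) / (Nat.card H : ℂ)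

lemma FS_indChar_of_index_two (H : Subgroup G) (hH : H.index = 2) (χ : H → ℂ) :
    FS G (indChar H χ) = FS H χ + gowIndicator H hH χ := by
  let F : G → ℂ := fun g => χ ⟨g ^ 2, Subgroup.sq_mem_of_index_two hH g⟩
  have sum_mem : ∑ g ∈ Finset.univ.filter (· ∈ H), F g = ∑ h : H, χ (h ^ 2) :=
    Finset.sum_subtype _ (by simp) F
  have sum_split : ∑ g, F g =
      ∑ h : H, χ (h ^ 2) + ∑ g ∈ Finset.univ.filter (fun g : G => g ∉ H), F g := by
    rw [← sum_mem, Finset.sum_filter_add_sum_filter_not]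
  simp only [FS_indChar, Subgroup.sq_mem_of_index_two hH, dite_true]
  rw [sum_split, add_div, FS, gowIndicator, Nat.card_eq_fintype_card]

end InducedCharacter

section SemidirectProduct

variable {Q E : Type} [Group Q] [Group E] (φ : E →* MulAut Q) (D : Subgroup E)

/-- The product `θ × λ`, as a function on the preimage `Q ⋊ D` of `D` in `Q ⋊ E`.
It is the external product of characters when `D` acts trivially on `Q`, so that `Q ⋊ D = Q × D`. -/
def outerProduct (θ : Q → ℂ) (lam : D → ℂ) :
    D.comap (SemidirectProduct.rightHom : Q ⋊[φ] E →* E) → ℂ :=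
  fun g => θ (g : Q ⋊[φ] E).left * lam ⟨SemidirectProduct.rightHom (g : Q ⋊[φ] E), g.2⟩

/-- The underlying bijection of `Q ⋊ D` with `Q × D`, used to sum over `Q ⋊ D`; it is
multiplicative only if `D` acts trivially on `Q`. -/
def comapRightHomEquivProd :
    D.comap (SemidirectProduct.rightHom : Q ⋊[φ] E →* E) ≃ Q × D where
  toFun g := (g.1.left, ⟨g.1.right, g.2⟩)
  invFun p := ⟨⟨p.1, p.2⟩, p.2.2⟩
  left_inv _ := rfl
  right_inv _ := rfl

lemma index_comap_rightHom :
    (D.comap (SemidirectProduct.rightHom : Q ⋊[φ] E →* E)).index = D.index :=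
  D.index_comap_of_surjective SemidirectProduct.rightHom_surjective

lemma card_comap_rightHom :
    Nat.card (D.comap (SemidirectProduct.rightHom : Q ⋊[φ] E →* E)) =
      Nat.card Q * Nat.card D := by
  rw [Nat.card_congr (comapRightHomEquivProd φ D), Nat.card_prod]

variable {φ D} [Fintype Q] [Fintype E]

lemma FS_outerProduct (hφD : ∀ d ∈ D, φ d = 1) (θ : Q → ℂ) (lam : D → ℂ) :
    FS _ (outerProduct φ D θ lam) = FS Q θ * FS D lam := by
  have sq_apply (q : Q) (d : D) :
      outerProduct φ D θ lam ((comapRightHomEquivProd φ D).symm (q, d) ^ 2) =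
        θ (q ^ 2) * lam (d ^ 2) := by
    have sq_eq : (comapRightHomEquivProd φ D).symm (q, d) ^ 2 =
        (comapRightHomEquivProd φ D).symm (q ^ 2, d ^ 2) := by
      ext <;> simp [comapRightHomEquivProd, sq, hφD]
    rw [sq_eq]
    rfl
  rw [FS, ← (comapRightHomEquivProd φ D).symm.sum_comp, Fintype.sum_prod_type,
    ← Nat.card_eq_fintype_card, card_comap_rightHom]
  simp only [sq_apply, ← Finset.sum_mul_sum, FS, Nat.card_eq_fintype_card, Nat.cast_mul,
    mul_div_mul_comm]

lemma gowIndicator_outerProduct (hD : D.index = 2) (hφinv : ∀ e ∉ D, ∀ q, φ e q = q⁻¹)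
    (θ : Q → ℂ) (lam : D → ℂ) :
    gowIndicator _ ((index_comap_rightHom φ D).trans hD) (outerProduct φ D θ lam) =
      θ 1 * gowIndicator D hD lam := by
  have sq_apply (q : Q) {e : E} (he : e ∉ D) (h : (⟨q, e⟩ : Q ⋊[φ] E) ^ 2 ∈
      D.comap (SemidirectProduct.rightHom : Q ⋊[φ] E →* E)) :
      outerProduct φ D θ lam ⟨(⟨q, e⟩ : Q ⋊[φ] E) ^ 2, h⟩ =
        θ 1 * lam ⟨e ^ 2, Subgroup.sq_mem_of_index_two hD e⟩ := by
    have sq_eq : (⟨q, e⟩ : Q ⋊[φ] E) ^ 2 = ⟨1, e ^ 2⟩ := by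
      ext <;> simp [sq, hφinv e he]
    simp only [sq_eq]
    rfl
  have hQ : (Nat.card Q : ℂ) ≠ 0 := Nat.cast_ne_zero.2 Nat.card_pos.ne'
  have sum_eq : ∑ g ∈ Finset.univ.filter (fun g : Q ⋊[φ] E => g ∉ D.comap
        SemidirectProduct.rightHom), outerProduct φ D θ lam
          ⟨g ^ 2, Subgroup.sq_mem_of_index_two ((index_comap_rightHom φ D).trans hD) g⟩ =
      ∑ _q : Q, ∑ e ∈ Finset.univ.filter (fun e : E => e ∉ D),
        θ 1 * lam ⟨e ^ 2, Subgroup.sq_mem_of_index_two hD e⟩ := by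
    simp only [Finset.sum_filter]
    rw [← SemidirectProduct.equivProd.symm.sum_comp, Fintype.sum_prod_type]
    refine Finset.sum_congr rfl fun q _ => Finset.sum_congr rfl fun e _ => ?_
    exact if_ctx_congr Iff.rfl (fun he => sq_apply q he _) fun _ => rfl
  rw [gowIndicator, sum_eq, Finset.sum_const, Finset.card_univ, nsmul_eq_mul, ← Finset.mul_sum,
    card_comap_rightHom, Nat.cast_mul, ← Nat.card_eq_fintype_card, mul_div_mul_left _ _ hQ,
    mul_div_assoc, gowIndicator]

lemma FS_indChar_outerProduct (hD : D.index = 2) (hφD : ∀ d ∈ D, φ d = 1)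
    (hφinv : ∀ e ∉ D, ∀ q, φ e q = q⁻¹) (θ : Q → ℂ) (lam : D → ℂ) :
    FS (Q ⋊[φ] E) (indChar _ (outerProduct φ D θ lam)) =
      FS Q θ * FS D lam + θ 1 * gowIndicator D hD lam := by
  rw [FS_indChar_of_index_two _ ((index_comap_rightHom φ D).trans hD), FS_outerProduct hφD,
    gowIndicator_outerProduct hD hφinv]

end SemidirectProduct

section LinearCharacter

lemma isMulCommutative_of_map_eq_inv {G : Type*} [Group G] (f : G →* G) (hf : ∀ g, f g = g⁻¹) :
    IsMulCommutative G :=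
  .of_comm fun a b => by simpa [hf] using map_mul f b⁻¹ a⁻¹

lemma exists_ρ_eq_smul_one_of_isMulCommutative {k G : Type*} [Field k] [IsAlgClosed k] [Monoid G]
    [IsMulCommutative G] (V : FDRep k G) [CategoryTheory.Simple V] (g : G) :
    ∃ c : k, V.ρ g = c • 1 := by
  let f : V ⟶ V :=
    { hom := Action.ρ V g
      comm := fun h => by
        have := congrArg (Action.ρ V) (mul_comm' g h)
        rwa [map_mul, map_mul] at this }
  obtain ⟨c, hc⟩ := CategoryTheory.endomorphism_simple_eq_smul_id k f
  exact ⟨c, (congrArg (fun u : V ⟶ V => u.hom.hom.hom) hc).symm⟩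

lemma character_mul_character_of_isMulCommutative {k G : Type*} [Field k] [IsAlgClosed k]
    [Monoid G] [IsMulCommutative G] (V : FDRep k G) [CategoryTheory.Simple V] (a b : G) :
    V.character a * V.character b = V.character 1 * V.character (a * b) := by
  obtain ⟨c, hc⟩ := exists_ρ_eq_smul_one_of_isMulCommutative V a
  obtain ⟨d, hd⟩ := exists_ρ_eq_smul_one_of_isMulCommutative V b
  simp only [FDRep.character, map_mul, map_one, hc, hd, smul_mul_smul_comm, mul_one, map_smul,
    smul_eq_mul]
  ring

lemma character_one_of_isMulCommutative.{u} {k G : Type u} [Field k] [IsAlgClosed k] [CharZero k]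
    [Group G] [Finite G] [IsMulCommutative G] (V : FDRep k G) [hV : CategoryTheory.Simple V] :
    V.character 1 = 1 := by
  have := Fintype.ofFinite G
  have sq_dim : (Module.finrank k V : k) * Module.finrank k V = 1 := by
    simpa [character_mul_character_of_isMulCommutative] using
      (FDRep.simple_iff_char_is_norm_one V).1 hV
  have dim_eq_one : Module.finrank k V = 1 :=
    Nat.eq_one_of_mul_eq_one_right (by exact_mod_cast sq_dim)
  rw [FDRep.char_one, dim_eq_one, Nat.cast_one]

variable {G : Type} [Group G]

lemma IsIrrChar.exists_monoidHom [Finite G] [IsMulCommutative G] {χ : G → ℂ}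
    (hχ : IsIrrChar G χ) : ∃ f : G →* ℂ, χ = f := by
  obtain ⟨V, hV, rfl⟩ := hχ
  have map_one : V.character 1 = 1 := character_one_of_isMulCommutative V
  have map_mul (a b : G) : V.character (a * b) = V.character a * V.character b := by
    rw [character_mul_character_of_isMulCommutative, map_one, one_mul]
  exact ⟨{ toFun := V.character, map_one' := map_one, map_mul' := map_mul }, rfl⟩

lemma IsIrrChar.apply_one [Finite G] [IsMulCommutative G] {χ : G → ℂ} (hχ : IsIrrChar G χ) :
    χ 1 = 1 := by
  obtain ⟨f, rfl⟩ := hχ.exists_monoidHom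
  exact map_one f

lemma starChar_eq_self_of_sq_eq_one {M : Type} [Monoid M] {f : M →* ℂ} (hf : f ^ 2 = 1) :
    starChar f = f := by
  funext m
  have hm : f m ^ 2 = 1 := DFunLike.congr_fun hf m
  rcases sq_eq_one_iff.1 hm with h | h <;> simp [starChar, h]

variable [Fintype G]

lemma FS_monoidHom_eq_zero {f : G →* ℂ} (hf : f ^ 2 ≠ 1) : FS G f = 0 := by
  have sum_sq : ∑ g, f (g ^ 2) = 0 := by
    simpa using sum_hom_units_eq_zero (f ^ 2) hf
  rw [FS, sum_sq, zero_div]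

lemma eq_one_of_starChar_eq_self_of_odd_card (hG : Odd (Fintype.card G)) {f : G →* ℂ}
    (hf : starChar f = f) : f = 1 := by
  ext g
  obtain ⟨r, hr⟩ := Complex.conj_eq_iff_real.1 (congrFun hf g)
  have hr_pow : r ^ Fintype.card G = 1 := by
    have : f g ^ Fintype.card G = 1 := by rw [← map_pow, pow_card_eq_one, map_one]
    exact_mod_cast hr ▸ this
  have : r = 1 := hG.strictMono_pow.injective (by simpa using hr_pow)
  simp [hr, this]

lemma IsIrrChar.starChar_ne_self_of_odd_card [IsMulCommutative G] (hG : Odd (Fintype.card G))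
    {χ : G → ℂ} (hχ : IsIrrChar G χ) (hχ1 : χ ≠ fun _ => 1) : starChar χ ≠ χ := by
  obtain ⟨f, rfl⟩ := hχ.exists_monoidHom
  exact fun h => hχ1 (by rw [eq_one_of_starChar_eq_self_of_odd_card hG h]; rfl)

lemma IsIrrChar.FS_eq_zero [IsMulCommutative G] {χ : G → ℂ} (hχ : IsIrrChar G χ)
    (hχ_star : starChar χ ≠ χ) : FS G χ = 0 := by
  obtain ⟨f, rfl⟩ := hχ.exists_monoidHom
  exact FS_monoidHom_eq_zero fun h => hχ_star (starChar_eq_self_of_sq_eq_one h)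

end LinearCharacter

theorem stmt11_general {Q E : Type} [Group Q] [Group E] [Fintype Q] [Fintype E]
    {D : Subgroup E} (hD : D.index = 2) {φ : E →* MulAut Q} (hφD : ∀ d ∈ D, φ d = 1)
    (hφinv : ∀ e ∉ D, ∀ q, φ e q = q⁻¹) {θ : Q → ℂ} (hθ : IsIrrChar Q θ)
    (hθ_star : starChar θ ≠ θ) (lam : D → ℂ) :
    FS (Q ⋊[φ] E) (indChar _ (outerProduct φ D θ lam)) = gowIndicator D hD lam := by
  obtain ⟨e, he⟩ : ∃ e, e ∉ D := by
    by_contra! h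
    simp [(Subgroup.eq_top_iff' D).2 h] at hD
  have : IsMulCommutative Q := isMulCommutative_of_map_eq_inv (φ e).toMonoidHom (hφinv e he)
  rw [FS_indChar_outerProduct hD hφD hφinv, hθ.FS_eq_zero hθ_star, hθ.apply_one, zero_mul,
    zero_add, one_mul]

/-- Let `E` be a finite 2-group, `D ≤ E` of index 2, `Q` cyclic of order 3 and
`G = Q ⋊ E` where `D` centralizes `Q` and `E∖D` inverts `Q`. Fix a nontrivial `θ ∈ Irr(Q)` and
for `λ ∈ Irr(D)` let `χ_λ = (θ × λ)^G`, induced from the subgroup `Q ⋊ D = Q × D`. Then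
`ε(χ_λ) = (1/|D|) ∑_{e ∈ E∖D} λ(e²)`, the Gow indicator of `λ`. -/
theorem stmt11 {Q E : Type} [Group Q] [Group E] [Fintype Q] [Fintype E]
    (hQcyc : IsCyclic Q) (hQ3 : Fintype.card Q = 3) (hE2 : IsPGroup 2 E)
    (D : Subgroup E) (hD : D.index = 2)
    (φ : E →* MulAut Q) (hφD : ∀ d : E, d ∈ D → φ d = 1)
    (hφinv : ∀ e : E, e ∉ D → ∀ q : Q, φ e q = q⁻¹)
    (θ : Q → ℂ) (hθ : IsIrrChar Q θ) (hθ1 : θ ≠ fun _ => 1)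
    (lam : ↥D → ℂ) (hlam : IsIrrChar ↥D lam) :
    FS (Q ⋊[φ] E) (indChar (Subgroup.comap (SemidirectProduct.rightHom : Q ⋊[φ] E →* E) D)
        (fun g => θ (g : Q ⋊[φ] E).left *
          lam ⟨SemidirectProduct.rightHom (g : Q ⋊[φ] E), g.2⟩)) =
      (∑ e ∈ Finset.univ.filter (fun e : E => e ∉ D),
        lam ⟨e ^ 2, Subgroup.sq_mem_of_index_two hD e⟩) / (Nat.card D : ℂ) := by
  have hQ_odd : Odd (Fintype.card Q) := hQ3 ▸ by decide
  exact stmt11_general hD hφD hφinv hθ (hθ.starChar_ne_self_of_odd_card hQ_odd hθ1) lam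
end
end
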